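/- Let f: A → B be a homomorphism of MV-algebras. Since f(Rad(A)) ⊆ Rad(B), f restricts to maps Rad(A) → Rad(B) and P(f): P(A) → P(B). Then the restriction f: Rad(A) → Rad(B) is injective if and only if P(f): P(A) → P(B) is injective, or (Rad(A)={0}, A is nontrivial, and B is trivial) — i.e. P(A) is the initial two-element algebra and P(B) is the terminal trivial algebra. -/

import Mathlib

namespace MVPaper

/-- An MV-algebra: a set with a binary `⊕`, a unary `¬`, and a constant `0`
satisfying the MV-algebra axioms. -/
class MV (α : Type*) where
  oplus : α → α → α
  neg : α → α
  zero : α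
  oplus_assoc : ∀ x y z : α, oplus x (oplus y z) = oplus (oplus x y) z
  oplus_comm : ∀ x y : α, oplus x y = oplus y x
  oplus_zero : ∀ x : α, oplus x zero = x
  neg_neg : ∀ x : α, neg (neg x) = x
  oplus_neg_zero : ∀ x : α, oplus x (neg zero) = neg zero
  lukasiewicz : ∀ x y : α,
    oplus (neg (oplus (neg x) y)) y = oplus (neg (oplus (neg y) x)) x

namespace MV

variable {α : Type*} [MV α]

/-- `1 := ¬0`. -/
def one : α := neg zero

/-- `x ⊙ y := ¬(¬x ⊕ ¬y)`. -/
def odot (x y : α) : α := neg (oplus (neg x) (neg y))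

/-- `x ⊖ y := ¬(¬x ⊕ y)`. -/
def ominus (x y : α) : α := neg (oplus (neg x) y)

/-- `d(x,y) := (x ⊖ y) ⊕ (y ⊖ x)`. -/
def dist (x y : α) : α := oplus (ominus x y) (ominus y x)

/-- The natural order: `x ≤ y` iff `¬x ⊕ y = 1`. -/
def le (x y : α) : Prop := oplus (neg x) y = one

/-- `x ∨ y := (x ⊖ y) ⊕ y`. -/
def sup (x y : α) : α := oplus (ominus x y) y

/-- `x ∧ y := x ⊙ (¬x ⊕ y)`. -/
def inf (x y : α) : α := odot x (oplus (neg x) y)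

/-- `n · a`, the `n`-fold sum `a ⊕ ⋯ ⊕ a`. -/
def nsmul : ℕ → α → α
  | 0, _ => zero
  | n + 1, a => oplus a (nsmul n a)

end MV

/-- Products of MV-algebras, with componentwise operations. -/
instance prodMV {α β : Type*} [MV α] [MV β] : MV (α × β) where
  oplus x y := (MV.oplus x.1 y.1, MV.oplus x.2 y.2)
  neg x := (MV.neg x.1, MV.neg x.2)
  zero := (MV.zero, MV.zero)
  oplus_assoc x y z :=
    congrArg₂ Prod.mk (MV.oplus_assoc _ _ _) (MV.oplus_assoc _ _ _)
  oplus_comm x y :=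
    congrArg₂ Prod.mk (MV.oplus_comm _ _) (MV.oplus_comm _ _)
  oplus_zero x := by
    obtain ⟨a, b⟩ := x
    exact congrArg₂ Prod.mk (MV.oplus_zero a) (MV.oplus_zero b)
  neg_neg x := by
    obtain ⟨a, b⟩ := x
    exact congrArg₂ Prod.mk (MV.neg_neg a) (MV.neg_neg b)
  oplus_neg_zero x :=
    congrArg₂ Prod.mk (MV.oplus_neg_zero _) (MV.oplus_neg_zero _)
  lukasiewicz x y :=
    congrArg₂ Prod.mk (MV.lukasiewicz _ _) (MV.lukasiewicz _ _)

/-- A homomorphism of MV-algebras: a map preserving `⊕`, `¬` and `0`. -/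
structure IsHom {α β : Type*} [MV α] [MV β] (f : α → β) : Prop where
  map_zero : f MV.zero = MV.zero
  map_oplus : ∀ x y : α, f (MV.oplus x y) = MV.oplus (f x) (f y)
  map_neg : ∀ x : α, f (MV.neg x) = MV.neg (f x)

/-- An ideal of an MV-algebra: contains `0`, closed under `⊕`, downward closed. -/
structure IsIdeal {α : Type*} [MV α] (I : Set α) : Prop where
  zero_mem : MV.zero ∈ I
  oplus_mem : ∀ ⦃x⦄, x ∈ I → ∀ ⦃y⦄, y ∈ I → MV.oplus x y ∈ I
  lower_mem : ∀ ⦃x⦄, x ∈ I → ∀ ⦃y⦄, MV.le y x → y ∈ I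

/-- The kernel of a homomorphism. -/
def ker {α β : Type*} [MV α] [MV β] (f : α → β) : Set α := {x | f x = MV.zero}

/-- The radical of an MV-algebra: `Rad(A) = {a | n·a ≤ ¬a for all n}`
(the intersection of all maximal proper ideals). -/
def Rad (α : Type*) [MV α] : Set α :=
  {a | ∀ n : ℕ, MV.le (MV.nsmul n a) (MV.neg a)}

/-- `P(A) := Rad(A) ∪ ¬Rad(A)`. -/
def PSet (α : Type*) [MV α] : Set α :=
  Rad α ∪ {x | MV.neg x ∈ Rad α}

/-- An MV-algebra is trivial if `0 = 1`. -/
def IsTrivial (α : Type*) [MV α] : Prop := (MV.zero : α) = MV.one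

/-- An MV-algebra is semisimple if its radical is trivial. -/
def Semisimple (α : Type*) [MV α] : Prop := Rad α = ({MV.zero} : Set α)

/-- An MV-algebra is perfect if `A = Rad(A) ∪ ¬Rad(A)`. -/
def Perfect (α : Type*) [MV α] : Prop := ∀ a : α, a ∈ PSet α

/-- `q : α → Q` realizes `Q` as the quotient of `α` by the ideal `I`,
i.e. by the congruence `x ∼ y ↔ d(x,y) ∈ I`. -/
structure IsQuotientBy {α Q : Type*} [MV α] [MV Q] (I : Set α) (q : α → Q) : Prop where
  hom : IsHom q
  surj : Function.Surjective q
  eq_iff : ∀ x y : α, q x = q y ↔ MV.dist x y ∈ I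

/-!
Negation carries injectivity of `f` on `Rad(A)` over to `¬Rad(A)`, so `P(f)` can fail to be
injective only by identifying an element of `Rad(A)` with one of `¬Rad(A)`. Their common image would
lie in `Rad(B) ∩ ¬Rad(B)`, which is empty unless `B` is trivial. If `B` is trivial, injectivity on
`Rad(A)` just says that `Rad(A) = {0}`.
-/

namespace MV

variable {α : Type*} [MV α] {x : α}

theorem neg_injective : Function.Injective (neg : α → α) :=
  Function.LeftInverse.injective neg_neg

theorem zero_oplus (x : α) : oplus zero x = x :=
  (oplus_comm zero x).trans (oplus_zero x)

theorem neg_one : neg (one : α) = zero := neg_neg zero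

theorem eq_one_of_one_le (h : le one x) : x = one := by
  rwa [le, neg_one, zero_oplus] at h

end MV

theorem IsTrivial.subsingleton {α : Type*} [MV α] (h : IsTrivial α) : Subsingleton α :=
  subsingleton_of_forall_eq MV.one fun x =>
    calc
      x = MV.oplus x MV.zero := (MV.oplus_zero x).symm
      _ = MV.oplus x MV.one := congrArg (MV.oplus x) h
      _ = MV.one := MV.oplus_neg_zero x

section Radical

variable {α : Type*} [MV α] {a : α}

theorem zero_mem_rad : (MV.zero : α) ∈ Rad α := fun _ => MV.oplus_neg_zero _

theorem le_neg_self_of_mem_rad (ha : a ∈ Rad α) : MV.le a (MV.neg a) := by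
  simpa only [MV.nsmul, MV.oplus_zero] using ha 1

theorem oplus_self_le_neg_of_mem_rad (ha : a ∈ Rad α) :
    MV.le (MV.oplus a a) (MV.neg a) := by
  simpa only [MV.nsmul, MV.oplus_zero] using ha 2

theorem eq_zero_of_mem_rad_of_oplus_self_eq_one (ha : a ∈ Rad α)
    (h : MV.oplus a a = MV.one) : a = MV.zero := by
  have neg_a : MV.neg a = MV.one :=
    MV.eq_one_of_one_le (h ▸ oplus_self_le_neg_of_mem_rad ha)
  exact MV.neg_injective neg_a

theorem disjoint_rad_preimage_neg_rad (hα : ¬ IsTrivial α) :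
    Disjoint (Rad α) (MV.neg ⁻¹' Rad α) := by
  refine Set.disjoint_left.2 fun a (ha : a ∈ Rad α) (hna : MV.neg a ∈ Rad α) => hα ?_
  have neg_oplus_neg : MV.oplus (MV.neg a) (MV.neg a) = MV.one := le_neg_self_of_mem_rad ha
  have oplus_self : MV.oplus a a = MV.one := by
    simpa only [MV.le, MV.neg_neg] using le_neg_self_of_mem_rad hna
  have a_zero : a = MV.zero := eq_zero_of_mem_rad_of_oplus_self_eq_one ha oplus_self
  have neg_a_zero : MV.neg a = MV.zero :=
    eq_zero_of_mem_rad_of_oplus_self_eq_one hna neg_oplus_neg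
  exact neg_a_zero.symm.trans (congrArg MV.neg a_zero)

end Radical

namespace IsHom

variable {α β : Type*} [MV α] [MV β] {f : α → β}

theorem map_one (hf : IsHom f) : f MV.one = MV.one :=
  (hf.map_neg MV.zero).trans (congrArg MV.neg hf.map_zero)

theorem map_nsmul (hf : IsHom f) (n : ℕ) (a : α) :
    f (MV.nsmul n a) = MV.nsmul n (f a) := by
  induction n with
  | zero => exact hf.map_zero
  | succ n ih => rw [MV.nsmul, hf.map_oplus, ih, MV.nsmul]

theorem map_le (hf : IsHom f) {x y : α} (h : MV.le x y) : MV.le (f x) (f y) := by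
  rw [MV.le, ← hf.map_neg, ← hf.map_oplus, h, hf.map_one]

theorem mapsTo_preimage_neg (hf : IsHom f) {S : Set α} {T : Set β} (h : Set.MapsTo f S T) :
    Set.MapsTo f (MV.neg ⁻¹' S) (MV.neg ⁻¹' T) := fun _ hx => by
  simpa only [Set.mem_preimage, hf.map_neg] using h hx

theorem injOn_preimage_neg (hf : IsHom f) {S : Set α} (h : Set.InjOn f S) :
    Set.InjOn f (MV.neg ⁻¹' S) := fun _ hx _ hy hxy =>
  MV.neg_injective (h hx hy (by rw [hf.map_neg, hf.map_neg, hxy]))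

theorem mapsTo_rad (hf : IsHom f) : Set.MapsTo f (Rad α) (Rad β) := fun _ ha n => by
  simpa only [hf.map_nsmul, hf.map_neg] using hf.map_le (ha n)

theorem mapsTo_pSet (hf : IsHom f) : Set.MapsTo f (PSet α) (PSet β) :=
  hf.mapsTo_rad.union_union (hf.mapsTo_preimage_neg hf.mapsTo_rad)

theorem injOn_pSet (hf : IsHom f) (hβ : ¬ IsTrivial β) (h : Set.InjOn f (Rad α)) :
    Set.InjOn f (PSet α) := by
  have hdisj : Disjoint (Rad α) (MV.neg ⁻¹' Rad α) :=
    ((disjoint_rad_preimage_neg_rad hβ).preimage f).mono hf.mapsTo_rad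
      (hf.mapsTo_preimage_neg hf.mapsTo_rad)
  refine (Set.injOn_union hdisj).2 ⟨h, hf.injOn_preimage_neg h, fun _ hx _ hy => ?_⟩
  exact (disjoint_rad_preimage_neg_rad hβ).ne_of_mem (hf.mapsTo_rad hx)
    (hf.mapsTo_preimage_neg hf.mapsTo_rad hy)

end IsHom

theorem rad_eq_singleton_zero_of_injOn {α β : Type*} [MV α] [Subsingleton β] {f : α → β}
    (h : Set.InjOn f (Rad α)) : Rad α = {MV.zero} :=
  Set.eq_singleton_iff_unique_mem.2
    ⟨zero_mem_rad, fun _ ha => h ha zero_mem_rad (Subsingleton.elim _ _)⟩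

/-- For a homomorphism `f : A → B`, the restriction `f : Rad(A) → Rad(B)` is
injective iff `P(f) : P(A) → P(B)` is injective, or `Rad(A) = {0}`, `A` is
nontrivial and `B` is trivial (i.e. `P(A)` is initial and `P(B)` terminal). -/
theorem rad_injective_iff {α β : Type*} [MV α] [MV β]
    {f : α → β} (hf : IsHom f) :
    Set.MapsTo f (Rad α) (Rad β) ∧ Set.MapsTo f (PSet α) (PSet β) ∧
    (Set.InjOn f (Rad α) ↔
      (Set.InjOn f (PSet α) ∨
        (Rad α = ({MV.zero} : Set α) ∧ ¬ IsTrivial α ∧ IsTrivial β))) := by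
  refine ⟨hf.mapsTo_rad, hf.mapsTo_pSet, fun hinj => ?_, ?_⟩
  · by_cases hβ : IsTrivial β
    · have := hβ.subsingleton
      by_cases hα : IsTrivial α
      · have := hα.subsingleton
        exact Or.inl (Function.injective_of_subsingleton f).injOn
      · exact Or.inr ⟨rad_eq_singleton_zero_of_injOn hinj, hα, hβ⟩
    · exact Or.inl (hf.injOn_pSet hβ hinj)
  · rintro (hinj | ⟨hrad, -, -⟩)
    · exact hinj.mono Set.subset_union_left
    · rw [hrad]
      exact Set.injOn_singleton f MV.zero

end MVPaper
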